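/- The pointwise-defined quasi-nonlocal operator L^qnl satisfies, for all u, v ∈ U, the variational representation ⟨L^qnl u, v⟩ = A_F ε Σ_{ℓ=−N+1}^{N} u'_ℓ v'_ℓ − φ''_{2F} ε Σ_{ℓ=−K}^{K} (u'_{ℓ+1} − u'_ℓ)(v'_{ℓ+1} − v'_ℓ). -/

import Mathlib

/-!
With `w_j = u_{j+1} - 2 u_j + u_{j-1}` and `W_j = w_j` for `|j| ≤ K`, `W_j = 0` otherwise, the piecewise
definition of the operator collapses to the single formula
`ε² (L u)_j = -A_F w_j - φ_{2F} (W_{j+1} - 2 W_j + W_{j-1})` (`lqnlFun_eq`): the corrections at the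
interface sites `K` and `K + 1` are exactly the second difference of the truncation.  The
representation is then one summation by parts for the first term (`sum_by_parts_one`) and two for the
second (`sum_by_parts_two`); the boundary terms vanish because `v` vanishes outside the open interval
`(-N, N)` and `W` is supported in `[-K, K]`.
-/

open Finset

noncomputable section

/-- lattice spacing ε = 1/N -/
def eps (N : ℕ) : ℝ := 1 / N

/-- membership in the displacement space U -/
def memU (N : ℕ) (u : ℤ → ℝ) : Prop :=
  ∀ j : ℤ, ((N : ℤ) ≤ j ∨ j ≤ -(N : ℤ)) → u j = 0

/-- backward first difference -/
def D1 (N : ℕ) (u : ℤ → ℝ) (ℓ : ℤ) : ℝ := (u ℓ - u (ℓ - 1)) / eps N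

/-- the next-nearest-neighbour part T_j(v) of the pointwise QNL operator,
for 0 ≤ j ≤ N−1 -/
def Tqnl (N K : ℕ) (v : ℤ → ℝ) (j : ℤ) : ℝ :=
  if j ≤ (K : ℤ) - 1 then (-v (j + 2) + 2 * v j - v (j - 2)) / (eps N) ^ 2
  else if j = (K : ℤ) then
    (-v (j + 2) + 2 * v j - v (j - 2)) / (eps N) ^ 2
      - (-v (j + 2) + 2 * v (j + 1) - v j) / (eps N) ^ 2
  else if j = (K : ℤ) + 1 then
    4 * (-v (j + 1) + 2 * v j - v (j - 1)) / (eps N) ^ 2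
      + (-v j + 2 * v (j - 1) - v (j - 2)) / (eps N) ^ 2
  else 4 * (-v (j + 1) + 2 * v j - v (j - 1)) / (eps N) ^ 2

/-- the pointwise QNL operator for 0 ≤ j ≤ N−1 -/
def lqnlPos (N K : ℕ) (φF φ2F : ℝ) (v : ℤ → ℝ) (j : ℤ) : ℝ :=
  φF * (-v (j + 1) + 2 * v j - v (j - 1)) / (eps N) ^ 2 + φ2F * Tqnl N K v j

/-- the pointwise QNL operator: for j = 0,…,N−1 given by `lqnlPos`, for
j = −N+1,…,−1 by mirror symmetry (L^qnl v)_j = (L^qnl (Rv))_{−j} with (Rv)_ℓ = v_{−ℓ},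
and (L^qnl v)_{±N} = 0. -/
def lqnlFun (N K : ℕ) (φF φ2F : ℝ) (v : ℤ → ℝ) (j : ℤ) : ℝ :=
  if 0 ≤ j ∧ j ≤ (N : ℤ) - 1 then lqnlPos N K φF φ2F v j
  else if -(N : ℤ) + 1 ≤ j ∧ j ≤ -1 then lqnlPos N K φF φ2F (fun ℓ => v (-ℓ)) (-j)
  else 0

/-- the QNL bilinear form -/
def Bqnl (N K : ℕ) (φF φ2F : ℝ) (u v : ℤ → ℝ) : ℝ :=
  (φF + 4 * φ2F) * (eps N * ∑ ℓ ∈ Icc (-(N : ℤ) + 1) (N : ℤ), D1 N u ℓ * D1 N v ℓ)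
    - φ2F * (eps N * ∑ ℓ ∈ Icc (-(K : ℤ)) (K : ℤ),
        (D1 N u (ℓ + 1) - D1 N u ℓ) * (D1 N v (ℓ + 1) - D1 N v ℓ))

/-- The undivided second difference `u_{j+1} - 2 u_j + u_{j-1}`. -/
def secDiff (u : ℤ → ℝ) (j : ℤ) : ℝ := u (j + 1) - 2 * u j + u (j - 1)

/-- The second difference truncated to the sites `-K, …, K`. -/
def truncDiff (K : ℕ) (u : ℤ → ℝ) (j : ℤ) : ℝ :=
  if -(K : ℤ) ≤ j ∧ j ≤ K then secDiff u j else 0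

lemma truncDiff_neg (K : ℕ) (u : ℤ → ℝ) (j : ℤ) :
    truncDiff K (fun ℓ => u (-ℓ)) j = truncDiff K u (-j) := by
  have h : secDiff (fun ℓ => u (-ℓ)) j = secDiff u (-j) := by
    simp only [secDiff, show -(j + 1) = -j - 1 by ring, show -(j - 1) = -j + 1 by ring]
    ring
  have e : (-(K : ℤ) ≤ j ∧ j ≤ K) ↔ (-(K : ℤ) ≤ -j ∧ -j ≤ K) := by omega
  simp only [truncDiff, h, e]

lemma sum_telescope (f : ℤ → ℝ) (a : ℤ) (n : ℕ) :
    ∑ ℓ ∈ Icc a (a + n), (f (ℓ + 1) - f ℓ) = f (a + n + 1) - f a := by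
  induction n with
  | zero => simp
  | succ n ih =>
    have h : Icc a (a + ((n + 1 : ℕ) : ℤ)) = insert (a + n + 1) (Icc a (a + n)) := by
      ext x
      simp only [mem_Icc, mem_insert]
      push_cast
      omega
    rw [h, sum_insert (by simp only [mem_Icc]; omega), ih]
    push_cast
    ring_nf

lemma sum_telescope_symm (N : ℕ) (hN : 2 ≤ N) (f : ℤ → ℝ) :
    ∑ ℓ ∈ Icc (-(N : ℤ) + 1) N, (f (ℓ + 1) - f ℓ) = f (N + 1) - f (-(N : ℤ) + 1) := by
  have h := sum_telescope f (-(N : ℤ) + 1) (2 * N - 1)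
  have e : -(N : ℤ) + 1 + ((2 * N - 1 : ℕ) : ℤ) = N := by omega
  rwa [e] at h

/-- For nonnegative sites the second-neighbour term is four times the nearest-neighbour one, plus
the second difference of the truncated second difference. -/
lemma Tqnl_eq (N K : ℕ) (hK1 : 1 ≤ K) (u : ℤ → ℝ) (j : ℤ) (hj : 0 ≤ j) :
    Tqnl N K u j = (-4 * secDiff u j
      - (truncDiff K u (j + 1) - 2 * truncDiff K u j + truncDiff K u (j - 1))) / (eps N) ^ 2 := by
  have a1 : j + 1 + 1 = j + 2 := by ring
  have a2 : j - 1 - 1 = j - 2 := by ring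
  have a3 : j + 1 - 1 = j := by ring
  have a4 : j - 1 + 1 = j := by ring
  unfold Tqnl
  split_ifs with h1 h2 h3
  · rw [truncDiff, truncDiff, truncDiff, if_pos (by omega), if_pos (by omega), if_pos (by omega)]
    simp only [secDiff, a1, a2, a3, a4]
    ring
  · rw [truncDiff, truncDiff, truncDiff, if_neg (by omega), if_pos (by omega), if_pos (by omega)]
    simp only [secDiff, a2, a4]
    ring
  · rw [truncDiff, truncDiff, truncDiff, if_neg (by omega), if_neg (by omega), if_pos (by omega)]
    simp only [secDiff, a2, a4]
    ring
  · rw [truncDiff, truncDiff, truncDiff, if_neg (by omega), if_neg (by omega), if_neg (by omega)]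
    simp only [secDiff]
    ring

lemma lqnlPos_eq (N K : ℕ) (hK1 : 1 ≤ K) (φF φ2F : ℝ) (u : ℤ → ℝ) (j : ℤ) (hj : 0 ≤ j) :
    lqnlPos N K φF φ2F u j = (-(φF + 4 * φ2F) * secDiff u j
      - φ2F * (truncDiff K u (j + 1) - 2 * truncDiff K u j + truncDiff K u (j - 1)))
        / (eps N) ^ 2 := by
  rw [lqnlPos, Tqnl_eq N K hK1 u j hj]
  simp only [secDiff]
  ring

/-- The reflected definition on negative sites agrees with the formula on nonnegative ones, so the
operator has one closed form at every interior site. -/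
lemma lqnlFun_eq (N K : ℕ) (hK1 : 1 ≤ K) (φF φ2F : ℝ) (u : ℤ → ℝ) (j : ℤ)
    (h1 : -(N : ℤ) + 1 ≤ j) (h2 : j ≤ (N : ℤ) - 1) :
    lqnlFun N K φF φ2F u j = (-(φF + 4 * φ2F) * secDiff u j
      - φ2F * (truncDiff K u (j + 1) - 2 * truncDiff K u j + truncDiff K u (j - 1)))
        / (eps N) ^ 2 := by
  unfold lqnlFun
  split_ifs with h3 h4
  · exact lqnlPos_eq N K hK1 φF φ2F u j h3.1
  · rw [lqnlPos_eq N K hK1 φF φ2F _ (-j) (by omega)]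
    simp only [truncDiff_neg, secDiff, show -(-j + 1) = j - 1 by ring,
      show -(-j - 1) = j + 1 by ring, neg_neg]
    ring
  · omega

lemma sum_by_parts_one (N : ℕ) (hN : 2 ≤ N) (u v : ℤ → ℝ) (hv : memU N v) :
    ∑ ℓ ∈ Icc (-(N : ℤ) + 1) N, secDiff u ℓ * v ℓ
      = -∑ ℓ ∈ Icc (-(N : ℤ) + 1) N, (u ℓ - u (ℓ - 1)) * (v ℓ - v (ℓ - 1)) := by
  have h := sum_telescope_symm N hN (fun j => (u j - u (j - 1)) * v (j - 1))
  simp only [add_sub_cancel_right] at h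
  rw [hv N (by omega), hv (-(N : ℤ)) (by omega)] at h
  rw [← sub_eq_zero, sub_neg_eq_add, ← sum_add_distrib]
  refine Eq.trans (sum_congr rfl fun j _ => ?_) (h.trans (by ring))
  simp only [secDiff]
  ring

lemma sum_by_parts_two (N K : ℕ) (hN : 2 ≤ N) (hK2 : (K : ℤ) ≤ (N : ℤ) - 2)
    (u v : ℤ → ℝ) (hv : memU N v) :
    ∑ ℓ ∈ Icc (-(N : ℤ) + 1) N,
        (truncDiff K u (ℓ + 1) - 2 * truncDiff K u ℓ + truncDiff K u (ℓ - 1)) * v ℓ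
      = ∑ ℓ ∈ Icc (-(K : ℤ)) K, secDiff u ℓ * secDiff v ℓ := by
  have hs : ∑ ℓ ∈ Icc (-(K : ℤ)) K, secDiff u ℓ * secDiff v ℓ
      = ∑ ℓ ∈ Icc (-(N : ℤ) + 1) N, truncDiff K u ℓ * secDiff v ℓ := by
    have hc : ∑ ℓ ∈ Icc (-(K : ℤ)) K, secDiff u ℓ * secDiff v ℓ
        = ∑ ℓ ∈ Icc (-(K : ℤ)) K, truncDiff K u ℓ * secDiff v ℓ := by
      refine sum_congr rfl fun j hj => ?_
      rw [truncDiff, if_pos (mem_Icc.mp hj)]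
    rw [hc]
    refine sum_subset (Icc_subset_Icc (by omega) (by omega)) fun j _ hj => ?_
    rw [truncDiff, if_neg (fun h => hj (mem_Icc.mpr h)), zero_mul]
  have h := sum_telescope_symm N hN
    (fun j => truncDiff K u j * v (j - 1) - truncDiff K u (j - 1) * v j)
  simp only [add_sub_cancel_right] at h
  rw [hv N (by omega), hv (-(N : ℤ)) (by omega), hv (N + 1) (by omega),
    show truncDiff K u (-(N : ℤ)) = 0 from if_neg (by omega)] at h
  rw [hs, ← sub_eq_zero, ← sum_sub_distrib]
  refine Eq.trans (sum_congr rfl fun j _ => ?_) (h.trans (by ring))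
  simp only [secDiff]
  ring

/-- Variational representation of the pointwise QNL operator: for all u, v ∈ U,
⟨L^qnl u, v⟩ = A_F ε Σ_ℓ u'_ℓ v'_ℓ − φ''_{2F} ε Σ_{ℓ=−K}^{K} (u'_{ℓ+1}−u'_ℓ)(v'_{ℓ+1}−v'_ℓ). -/
theorem stmt7 (N K : ℕ) (hN : 2 ≤ N) (hK1 : 1 ≤ K) (hK2 : (K : ℤ) ≤ (N : ℤ) - 2)
    (φF φ2F : ℝ) (u v : ℤ → ℝ) (hu : memU N u) (hv : memU N v) :
    eps N * ∑ ℓ ∈ Icc (-(N : ℤ) + 1) (N : ℤ), lqnlFun N K φF φ2F u ℓ * v ℓ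
      = Bqnl N K φF φ2F u v := by
  have hL : ∑ ℓ ∈ Icc (-(N : ℤ) + 1) (N : ℤ), lqnlFun N K φF φ2F u ℓ * v ℓ
      = -(φF + 4 * φ2F) / (eps N) ^ 2 * (∑ ℓ ∈ Icc (-(N : ℤ) + 1) N, secDiff u ℓ * v ℓ)
        - φ2F / (eps N) ^ 2 * ∑ ℓ ∈ Icc (-(N : ℤ) + 1) N,
          (truncDiff K u (ℓ + 1) - 2 * truncDiff K u ℓ + truncDiff K u (ℓ - 1)) * v ℓ := by
    rw [mul_sum, mul_sum, ← sum_sub_distrib]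
    refine sum_congr rfl fun j hj => ?_
    rw [mem_Icc] at hj
    rcases eq_or_ne j N with rfl | hne
    · rw [hv _ (Or.inl le_rfl)]
      ring
    · rw [lqnlFun_eq N K hK1 φF φ2F u j hj.1 (by omega)]
      ring
  have hA : ∑ ℓ ∈ Icc (-(N : ℤ) + 1) (N : ℤ), D1 N u ℓ * D1 N v ℓ
      = 1 / (eps N) ^ 2
        * ∑ ℓ ∈ Icc (-(N : ℤ) + 1) N, (u ℓ - u (ℓ - 1)) * (v ℓ - v (ℓ - 1)) := by
    rw [mul_sum]
    refine sum_congr rfl fun j _ => ?_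
    simp only [D1]
    ring
  have hB : ∑ ℓ ∈ Icc (-(K : ℤ)) (K : ℤ),
        (D1 N u (ℓ + 1) - D1 N u ℓ) * (D1 N v (ℓ + 1) - D1 N v ℓ)
      = 1 / (eps N) ^ 2 * ∑ ℓ ∈ Icc (-(K : ℤ)) K, secDiff u ℓ * secDiff v ℓ := by
    rw [mul_sum]
    refine sum_congr rfl fun j _ => ?_
    simp only [D1, secDiff, add_sub_cancel_right]
    ring
  rw [Bqnl, hL, hA, hB, sum_by_parts_one N hN u v hv, sum_by_parts_two N K hN hK2 u v hv]
  ring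

end
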